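/- Let N ≥ 2, let 1 ≤ n < N, let ρ be a positive semidefinite N-qubit operator, and let α be a real number with −1 ≤ α ≤ 2. Then for every subset X ⊆ Fin N with |X| = n, the matrix σ = Tr(ρ)·𝟙 + α·ρ is separable across the bipartition X : Xᶜ; in particular, for n ≤ N − n, σ has entanglement depth at most N − n. -/

import Mathlib

/-!
The map `ρ ↦ Tr(ρ)·𝟙 + α·ρ` is linear in `ρ` and affine in `α`, and separable operators form a
convex cone, so it suffices to treat a pure state `ψ = ∑ aᵢ eᵢ ⊗ fᵢ`, in Schmidt form, and the
endpoints `α = -1` and `α = 2`.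

Averaging the product states `(∑ ω^θᵢ pᵢ) ⊗ (∑ ω^(-θᵢ) qᵢ)` over all `θ`, with `ω` a primitive cube
root of unity, shows that `|∑ pᵢ ⊗ qᵢ⟩⟨∑ pᵢ ⊗ qᵢ| + ∑_{i ≠ j} |pᵢ ⊗ qⱼ⟩⟨pᵢ ⊗ qⱼ|` is separable. For
`α = 2` this is used with `(p, q) = (e, a f)` and with `(a e, f)`. For `α = -1`, Lagrange's identity
writes `(∑ aᵢ²) ∑ |eᵢ ⊗ fᵢ⟩⟨eᵢ ⊗ fᵢ| - |ψ⟩⟨ψ|` as half the sum over `i ≠ j` of the rank-one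
operators of `aⱼ eᵢ ⊗ fᵢ - aᵢ eⱼ ⊗ fⱼ`, and averaging applies to each of them. In both cases what
is left over is diagonal in the product vectors `eᵢ ⊗ fⱼ`, with nonnegative coefficients because
`aᵢ² + aⱼ² ≤ ∑ aₖ² = Tr |ψ⟩⟨ψ|` for `i ≠ j`.
-/

open scoped ComplexOrder

noncomputable section

/-- Separability of an `N`-qubit matrix across the bipartition `X : Xᶜ`. -/
def SepAcross {N : ℕ} (X : Finset (Fin N))
    (σ : Matrix (Fin N → Fin 2) (Fin N → Fin 2) ℂ) : Prop :=
  ∃ (K : ℕ)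
    (A : Fin K → Matrix ({i // i ∈ X} → Fin 2) ({i // i ∈ X} → Fin 2) ℂ)
    (B : Fin K → Matrix ({i // i ∈ Xᶜ} → Fin 2) ({i // i ∈ Xᶜ} → Fin 2) ℂ),
    (∀ k, (A k).PosSemidef) ∧ (∀ k, (B k).PosSemidef) ∧
    ∀ x y, σ x y =
      ∑ k, A k (fun i => x i.1) (fun i => y i.1) * B k (fun i => x i.1) (fun i => y i.1)

/-- Partial transpose with respect to the qubits in `X`. -/
def pt {N : ℕ} (X : Finset (Fin N))
    (σ : Matrix (Fin N → Fin 2) (Fin N → Fin 2) ℂ) :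
    Matrix (Fin N → Fin 2) (Fin N → Fin 2) ℂ :=
  fun x y => σ (fun i => if i ∈ X then y i else x i) (fun i => if i ∈ X then x i else y i)

/-- The Dicke state `|S_k^N⟩`. -/
def dicke (N k : ℕ) : (Fin N → Fin 2) → ℂ :=
  fun x => if (Finset.univ.filter (fun i => x i = 1)).card = k
    then ((Real.sqrt (N.choose k))⁻¹ : ℝ) else 0

/-- The projector onto the symmetric subspace of `N` qubits. -/
def symProj (N : ℕ) : Matrix (Fin N → Fin 2) (Fin N → Fin 2) ℂ :=
  fun x y => ∑ k ∈ Finset.range (N + 1), dicke N k x * star (dicke N k y)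

/-- Full separability of an `N`-qubit matrix. -/
def FullySep {N : ℕ} (σ : Matrix (Fin N → Fin 2) (Fin N → Fin 2) ℂ) : Prop :=
  ∃ (K : ℕ) (A : Fin K → Fin N → Matrix (Fin 2) (Fin 2) ℂ),
    (∀ k i, (A k i).PosSemidef) ∧
    ∀ x y, σ x y = ∑ k, ∏ i, A k i (x i) (y i)

/-- The second Pauli matrix. -/
def pauliY : Matrix (Fin 2) (Fin 2) ℂ := !![0, -Complex.I; Complex.I, 0]

/-- The `N`-qubit operator acting as `σy` on each qubit in `X` and trivially elsewhere. -/
def pauliYat {N : ℕ} (X : Finset (Fin N)) :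
    Matrix (Fin N → Fin 2) (Fin N → Fin 2) ℂ :=
  fun x y => ∏ i, if i ∈ X then pauliY (x i) (y i) else (if x i = y i then 1 else 0)

/-- `(σy@X) · ρ^{T_X} · (σy@X)`. -/
def tildeAt {N : ℕ} (X : Finset (Fin N))
    (ρ : Matrix (Fin N → Fin 2) (Fin N → Fin 2) ℂ) :
    Matrix (Fin N → Fin 2) (Fin N → Fin 2) ℂ :=
  pauliYat X * pt X ρ * pauliYat X

/-- The Hankel matrix `M_l(q)` with entries `q_{i+j+l} / (N choose (i+j+l))`. -/
def hankel (N l : ℕ) (q : ℕ → ℝ) :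
    Matrix (Fin ((N - l) / 2 + 1)) (Fin ((N - l) / 2 + 1)) ℝ :=
  fun i j => q ((i : ℕ) + j + l) / (N.choose ((i : ℕ) + j + l))

/-- The diagonal symmetric state `Σ_k p_k |S_k^N⟩⟨S_k^N|`. -/
def rhoDS (N : ℕ) (p : ℕ → ℝ) : Matrix (Fin N → Fin 2) (Fin N → Fin 2) ℂ :=
  fun x y => ∑ k ∈ Finset.range (N + 1), (p k : ℂ) * dicke N k x * star (dicke N k y)

section RankOne

open Matrix
open scoped Kronecker MatrixOrder

variable {𝕜 m n ι : Type*} [RCLike 𝕜]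

/-- The rank-one operator `|v⟩⟨v|`. -/
def ketBra (v : m → 𝕜) : Matrix m m 𝕜 := vecMulVec v (star v)

lemma ketBra_smul (a : ℝ) (v : m → 𝕜) : ketBra (a • v) = a ^ 2 • ketBra v := by
  rw [ketBra, star_smul, star_trivial, smul_vecMulVec, vecMulVec_smul, smul_smul, ← sq, ketBra]

lemma posSemidef_ketBra [Finite m] (v : m → 𝕜) : (ketBra v).PosSemidef :=
  posSemidef_vecMulVec_self_star v

lemma ketBra_sum [Fintype ι] (v : ι → m → 𝕜) :
    ketBra (∑ i, v i) = ∑ i, ∑ j, vecMulVec (v i) (star (v j)) := by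
  ext x y
  simp [ketBra, vecMulVec_apply, Matrix.sum_apply, Finset.sum_mul_sum]

lemma sum_ketBra_col [Fintype n] (M : Matrix m n 𝕜) : ∑ j, ketBra (M.col j) = M * Mᴴ := by
  ext x y
  simp [ketBra, vecMulVec_apply, Matrix.sum_apply, mul_apply]

lemma sum_ketBra_smul_sub_smul [Fintype ι] (a : ι → ℝ) (v : ι → m → 𝕜) :
    ∑ i, ∑ j, ketBra (a j • v i - a i • v j) =
      (2 : ℝ) • ((∑ i, a i ^ 2) • ∑ i, ketBra (v i) - ketBra (∑ i, a i • v i)) := by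
  have expand (i j : ι) : ketBra (a j • v i - a i • v j) =
      a j ^ 2 • ketBra (v i) + a i ^ 2 • ketBra (v j)
        - (vecMulVec (a i • v i) (star (a j • v j)) +
          vecMulVec (a j • v j) (star (a i • v i))) := by
    ext x y
    simp only [ketBra, vecMulVec_apply, Matrix.add_apply, Matrix.sub_apply, Matrix.smul_apply,
      Pi.sub_apply, Pi.smul_apply, Pi.star_apply, star_sub, star_smul, star_trivial,
      RCLike.real_smul_eq_coe_mul]
    push_cast
    ring
  simp only [expand, Finset.sum_sub_distrib, Finset.sum_add_distrib, ketBra_sum]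
  rw [Finset.sum_comm (f := fun i j => vecMulVec (a j • v j) (star (a i • v i)))]
  simp only [← Finset.smul_sum, ← Finset.sum_smul]
  module

lemma conjTranspose_mul_self_le_one [Fintype m] [Fintype n] [DecidableEq m] [DecidableEq n]
    {V : Matrix m n 𝕜} (hV : V * Vᴴ ≤ 1) : Vᴴ * V ≤ 1 := by
  let _ : Invertible (1 : Matrix m m 𝕜) := invertibleOne
  let _ : Invertible (1 : Matrix n n 𝕜) := invertibleOne
  have h₁ := PosDef.fromBlocks₁₁ (A := (1 : Matrix m m 𝕜)) V 1 PosDef.one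
  have h₂ := PosDef.fromBlocks₂₂ (1 : Matrix m m 𝕜) V (D := (1 : Matrix n n 𝕜)) PosDef.one
  simp only [inv_one, Matrix.mul_one] at h₁ h₂
  exact Matrix.le_iff.2 (h₁.1 (h₂.2 (Matrix.le_iff.1 hV)))

lemma exists_eq_diagonal_mul_of_mul_conjTranspose_eq_diagonal [Fintype m] [Fintype n]
    [DecidableEq m] {W : Matrix m n 𝕜} {d : m → ℝ}
    (hW : W * Wᴴ = diagonal fun i => ((d i ^ 2 : ℝ) : 𝕜)) :
    ∃ V : Matrix m n 𝕜, V * Vᴴ ≤ 1 ∧ W = diagonal (fun i => (d i : 𝕜)) * V := by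
  refine ⟨diagonal (fun i => (d i : 𝕜)⁻¹) * W, ?_, ?_⟩
  · have gram : diagonal (fun i => (d i : 𝕜)⁻¹) * W * (diagonal (fun i => (d i : 𝕜)⁻¹) * W)ᴴ =
        diagonal fun i => if d i = 0 then 0 else 1 := by
      rw [conjTranspose_mul, Matrix.mul_assoc, ← Matrix.mul_assoc W, hW, diagonal_conjTranspose,
        diagonal_mul_diagonal, diagonal_mul_diagonal]
      congr! 2 with i
      by_cases h : d i = 0 <;> simp [h, sq]
    rw [gram, Matrix.le_iff, ← diagonal_one, diagonal_sub]
    refine PosSemidef.diagonal fun i => ?_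
    by_cases h : d i = 0 <;> simp [h]
  · ext i j
    by_cases h : d i = 0
    · have row_eq_zero : W i = 0 := by
        have hii : (W * Wᴴ) i i = 0 := by simp [hW, h]
        exact dotProduct_self_star_eq_zero.1 hii
      simp [h, row_eq_zero]
    · simp [h]

lemma exists_singular_value_decomposition [Fintype m] [Fintype n] [DecidableEq m]
    [DecidableEq n] (M : Matrix m n 𝕜) :
    ∃ (U : Matrix m m 𝕜) (d : m → ℝ) (V : Matrix m n 𝕜), U * Uᴴ = 1 ∧ Vᴴ * V ≤ 1 ∧
      M = U * diagonal (fun i => (d i : 𝕜)) * V ∧ (M * Mᴴ).trace = ((∑ i, d i ^ 2 : ℝ) : 𝕜) := by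
  have hM : (M * Mᴴ).PosSemidef := posSemidef_self_mul_conjTranspose M
  set U : Matrix m m 𝕜 := (hM.isHermitian.eigenvectorUnitary : Matrix m m 𝕜)
  have hUU : U * Uᴴ = 1 := Unitary.coe_mul_star_self _
  let d (i : m) : ℝ := √(hM.isHermitian.eigenvalues i)
  have hd (i : m) : d i ^ 2 = hM.isHermitian.eigenvalues i :=
    Real.sq_sqrt (hM.eigenvalues_nonneg i)
  have hW : (Uᴴ * M) * (Uᴴ * M)ᴴ = diagonal fun i => ((d i ^ 2 : ℝ) : 𝕜) := by
    have := hM.isHermitian.conjStarAlgAut_star_eigenvectorUnitary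
    rw [Unitary.conjStarAlgAut_apply, Unitary.coe_star, star_star] at this
    simp only [hd]
    rw [conjTranspose_mul, conjTranspose_conjTranspose, Matrix.mul_assoc, ← Matrix.mul_assoc M,
      ← Matrix.mul_assoc]
    exact this
  obtain ⟨V, hV, hWV⟩ := exists_eq_diagonal_mul_of_mul_conjTranspose_eq_diagonal hW
  refine ⟨U, d, V, hUU, conjTranspose_mul_self_le_one hV, ?_, ?_⟩
  · rw [Matrix.mul_assoc, ← hWV, ← Matrix.mul_assoc, hUU, Matrix.one_mul]
  · simp only [hd, hM.isHermitian.trace_eq_sum_eigenvalues, RCLike.ofReal_sum]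

/-- The product vector `v ⊗ w`. -/
def prodVec (v : m → 𝕜) (w : n → 𝕜) : m × n → 𝕜 := fun z => v z.1 * w z.2

lemma ketBra_prodVec (v : m → 𝕜) (w : n → 𝕜) :
    ketBra (prodVec v w) = ketBra v ⊗ₖ ketBra w := by
  ext x y
  simp only [ketBra, prodVec, vecMulVec_apply, kroneckerMap_apply, Pi.star_apply, star_mul']
  ring

lemma smul_prodVec (a : ℝ) (v : m → 𝕜) (w : n → 𝕜) : prodVec (a • v) w = a • prodVec v w :=
  funext fun z => smul_mul_assoc a (v z.1) (w z.2)

lemma prodVec_smul (a : ℝ) (v : m → 𝕜) (w : n → 𝕜) : prodVec v (a • w) = a • prodVec v w :=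
  funext fun z => mul_smul_comm a (v z.1) (w z.2)

lemma exists_schmidt_decomposition [Fintype m] [Fintype n] [DecidableEq m] [DecidableEq n]
    (ψ : m × n → 𝕜) :
    ∃ (e : m → m → 𝕜) (f : m → n → 𝕜) (a : m → ℝ),
      ∑ i, ketBra (e i) = 1 ∧ ∑ i, ketBra (f i) ≤ 1 ∧ ψ = ∑ i, a i • prodVec (e i) (f i) ∧
        (ketBra ψ).trace = ((∑ i, a i ^ 2 : ℝ) : 𝕜) := by
  obtain ⟨U, d, V, hU, hV, hM, htrace⟩ :=
    exists_singular_value_decomposition (Matrix.of fun x y => ψ (x, y))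
  refine ⟨U.col, Vᵀ.col, d, by rw [sum_ketBra_col, hU], ?_, ?_, ?_⟩
  · have htranspose : Vᵀ * Vᵀᴴ = (Vᴴ * V)ᵀ := by rw [transpose_mul]; rfl
    rw [sum_ketBra_col, htranspose, Matrix.le_iff, ← transpose_one, ← transpose_sub]
    exact (Matrix.le_iff.1 hV).transpose
  · ext ⟨x, y⟩
    have := congrFun₂ hM x y
    simp only [of_apply, mul_apply (M := U * _), mul_diagonal] at this
    simp only [this, prodVec, Finset.sum_apply, Pi.smul_apply, col_apply, transpose_apply,
      RCLike.real_smul_eq_coe_mul]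
    exact Finset.sum_congr rfl fun i _ => by ring
  · rw [← htrace]
    simp [ketBra, Matrix.trace, vecMulVec_apply, mul_apply, Fintype.sum_prod_type]

end RankOne

section PhaseAveraging

variable {G S m n ι : Type*}

lemma sum_ketBra_sum_addChar_smul [AddCommGroup G] [Fintype G] [Fintype S]
    {χ : S → AddChar G ℂ} (hχ : Function.Injective χ) (w : S → m → ℂ) :
    ∑ g, ketBra (∑ s, χ s g • w s) = (Fintype.card G : ℝ) • ∑ s, ketBra (w s) := by
  classical
  have orthogonality (s t : S) :
      ∑ g, χ s g * star (χ t g) = if s = t then (Fintype.card G : ℂ) else 0 := by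
    have := AddChar.sum_eq_ite (χ s - χ t)
    simp_rw [AddChar.sub_apply, AddChar.map_neg_eq_conj, sub_eq_zero, hχ.eq_iff] at this
    exact this
  calc ∑ g, ketBra (∑ s, χ s g • w s)
      = ∑ g, ∑ s, ∑ t, (χ s g * star (χ t g)) • Matrix.vecMulVec (w s) (star (w t)) := by
        simp only [ketBra_sum, star_smul, Matrix.smul_vecMulVec, Matrix.vecMulVec_smul, smul_smul,
          mul_comm]
    _ = ∑ s, ∑ t, (∑ g, χ s g * star (χ t g)) • Matrix.vecMulVec (w s) (star (w t)) := by
        simp only [Finset.sum_smul]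
        rw [Finset.sum_comm]
        exact Finset.sum_congr rfl fun s _ => Finset.sum_comm
    _ = (Fintype.card G : ℝ) • ∑ s, ketBra (w s) := by
        simp only [orthogonality, ite_smul, zero_smul, Finset.sum_ite_eq, Finset.mem_univ, if_true,
          Nat.cast_smul_eq_nsmul, Finset.smul_sum, ketBra]

variable [Fintype ι]

/-- The phase differences `θ ↦ θ i - θ j` of a choice `θ` of cube roots of unity, indexed by the
ordered pairs `i ≠ j`; `none` stands for all the pairs `i = j`, whose phase difference is zero.
Signs would not do in place of cube roots: they do not tell `θ i - θ j` from `θ j - θ i`. -/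
def phaseDiff : Option (Finset.univ : Finset ι).offDiag → (ι → ZMod 3) →+ ZMod 3
  | none => 0
  | some x => Pi.evalAddMonoidHom (fun _ => ZMod 3) x.1.1 - Pi.evalAddMonoidHom _ x.1.2

@[simp]
lemma phaseDiff_none_apply (θ : ι → ZMod 3) : phaseDiff none θ = 0 :=
  rfl

@[simp]
lemma phaseDiff_some_apply (x : (Finset.univ : Finset ι).offDiag) (θ : ι → ZMod 3) :
    phaseDiff (some x) θ = θ x.1.1 - θ x.1.2 :=
  rfl

lemma phaseDiff_injective : Function.Injective (phaseDiff (ι := ι)) := by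
  classical
  have : (1 : ZMod 3) ≠ -1 := by decide
  have eq_at_single {s t : Option (Finset.univ : Finset ι).offDiag}
      (h : phaseDiff s = phaseDiff t) (i : ι) :
      phaseDiff s (Pi.single i 1) = phaseDiff t (Pi.single i 1) :=
    DFunLike.congr_fun h _
  rintro (_ | ⟨⟨i, j⟩, hij⟩) (_ | ⟨⟨k, l⟩, hkl⟩) h
  · rfl
  · have hk := eq_at_single h k
    simp [(Finset.mem_offDiag.1 hkl).2.2] at hk
  · have hi := eq_at_single h i
    simp [(Finset.mem_offDiag.1 hij).2.2] at hi
  · have hi := eq_at_single h i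
    have hj := eq_at_single h j
    simp only [phaseDiff_some_apply, Pi.single_apply] at hi hj
    grind

/-- The character `θ ↦ ω ^ (θ i - θ j)`, where `ω = exp (2πi/3)`, with the same indexing as
`phaseDiff`. -/
def phaseChar (s : Option (Finset.univ : Finset ι).offDiag) : AddChar (ι → ZMod 3) ℂ :=
  ZMod.stdAddChar.compAddMonoidHom (phaseDiff s)

lemma phaseChar_injective : Function.Injective (phaseChar (ι := ι)) :=
  (AddChar.compAddMonoidHom_injective_right _ ZMod.injective_stdAddChar).comp
    phaseDiff_injective

lemma sum_prod_eq_sum_add_sum_offDiag {M : Type*} [AddCommMonoid M] (F : ι × ι → M) :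
    ∑ x, F x = ∑ i, F (i, i) + ∑ x ∈ Finset.univ.offDiag, F x := by
  classical
  rw [← Finset.univ_product_univ, ← Finset.diag_union_offDiag,
    Finset.sum_union (Finset.disjoint_diag_offDiag _), Finset.sum_diag]

lemma sum_phaseChar_smul_prodVec (p : ι → m → ℂ) (q : ι → n → ℂ) (θ : ι → ZMod 3) :
    ∑ s, phaseChar s θ • (s.elim (∑ i, prodVec (p i) (q i)) fun x => prodVec (p x.1.1) (q x.1.2)) =
      prodVec (∑ i, (ZMod.stdAddChar (θ i) : ℂ) • p i)
        (∑ i, (ZMod.stdAddChar (-θ i) : ℂ) • q i) := by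
  have prodVec_sum_sum : prodVec (∑ i, (ZMod.stdAddChar (θ i) : ℂ) • p i)
      (∑ i, (ZMod.stdAddChar (-θ i) : ℂ) • q i) =
      ∑ x : ι × ι, (ZMod.stdAddChar (θ x.1 - θ x.2) : ℂ) • prodVec (p x.1) (q x.2) := by
    ext z
    simp only [prodVec, Finset.sum_apply, Pi.smul_apply, smul_eq_mul, Finset.sum_mul_sum,
      Fintype.sum_prod_type, sub_eq_add_neg, AddChar.map_add_eq_mul]
    exact Finset.sum_congr rfl fun i _ => Finset.sum_congr rfl fun j _ => by ring
  rw [prodVec_sum_sum, sum_prod_eq_sum_add_sum_offDiag, Fintype.sum_option,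
    ← Finset.sum_coe_sort Finset.univ.offDiag]
  simp [phaseChar]

end PhaseAveraging

section SeparableCone

open Matrix
open scoped Kronecker MatrixOrder

variable {m n ι κ : Type*}

/-- The cone of separable operators on the bipartite system `m × n`. -/
def separableCone (m n : Type*) : PointedCone ℝ (Matrix (m × n) (m × n) ℂ) :=
  PointedCone.hull ℝ {M | ∃ (P : Matrix m m ℂ) (Q : Matrix n n ℂ),
    P.PosSemidef ∧ Q.PosSemidef ∧ P ⊗ₖ Q = M}

lemma kronecker_mem_separableCone {P : Matrix m m ℂ} {Q : Matrix n n ℂ} (hP : P.PosSemidef)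
    (hQ : Q.PosSemidef) : P ⊗ₖ Q ∈ separableCone m n :=
  PointedCone.subset_hull ⟨P, Q, hP, hQ, rfl⟩

lemma exists_eq_sum_kronecker_of_mem_separableCone {M : Matrix (m × n) (m × n) ℂ}
    (hM : M ∈ separableCone m n) :
    ∃ (K : ℕ) (P : Fin K → Matrix m m ℂ) (Q : Fin K → Matrix n n ℂ),
      (∀ k, (P k).PosSemidef) ∧ (∀ k, (Q k).PosSemidef) ∧ M = ∑ k, P k ⊗ₖ Q k := by
  obtain ⟨K, c, M', rfl⟩ := Submodule.mem_span_set'.1 hM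
  choose P Q hP hQ hPQ using fun k => (M' k).2
  refine ⟨K, fun k => (c k : ℝ) • P k, Q, fun k => (hP k).smul (c k).2, hQ, ?_⟩
  simp only [smul_kronecker, hPQ]
  rfl

lemma ketBra_prodVec_mem_separableCone [Finite m] [Finite n] (v : m → ℂ) (w : n → ℂ) :
    ketBra (prodVec v w) ∈ separableCone m n := by
  rw [ketBra_prodVec]
  exact kronecker_mem_separableCone (posSemidef_ketBra v) (posSemidef_ketBra w)

lemma ketBra_sum_prodVec_add_sum_offDiag_mem_separableCone [Finite m] [Finite n] [Fintype ι]
    (p : ι → m → ℂ) (q : ι → n → ℂ) :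
    ketBra (∑ i, prodVec (p i) (q i)) +
      ∑ x ∈ Finset.univ.offDiag, ketBra (prodVec (p x.1) (q x.2)) ∈ separableCone m n := by
  classical
  let w (s : Option (Finset.univ : Finset ι).offDiag) : m × n → ℂ :=
    s.elim (∑ i, prodVec (p i) (q i)) fun x => prodVec (p x.1.1) (q x.1.2)
  have average : ketBra (∑ i, prodVec (p i) (q i)) +
      ∑ x ∈ Finset.univ.offDiag, ketBra (prodVec (p x.1) (q x.2)) =
      (Fintype.card (ι → ZMod 3) : ℝ)⁻¹ • ∑ θ, ketBra (∑ s, phaseChar s θ • w s) := by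
    rw [sum_ketBra_sum_addChar_smul phaseChar_injective, inv_smul_smul₀ (by positivity),
      Fintype.sum_option, ← Finset.sum_coe_sort Finset.univ.offDiag]
    rfl
  rw [average]
  refine (separableCone m n).smul_mem (by positivity) (sum_mem fun θ _ => ?_)
  rw [sum_phaseChar_smul_prodVec]
  exact ketBra_prodVec_mem_separableCone _ _

lemma ketBra_add_prodVec_mem_separableCone [Finite m] [Finite n] (p p' : m → ℂ) (q q' : n → ℂ) :
    ketBra (prodVec p q + prodVec p' q') + (ketBra (prodVec p q') + ketBra (prodVec p' q)) ∈
      separableCone m n := by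
  have offDiag_two : (Finset.univ : Finset (Fin 2)).offDiag = {(0, 1), (1, 0)} := by decide
  simpa [Fin.sum_univ_two, offDiag_two] using
    ketBra_sum_prodVec_add_sum_offDiag_mem_separableCone ![p, p'] ![q, q']

lemma smul_one_sub_sum_mem_separableCone [Finite m] [Finite n] [DecidableEq m] [DecidableEq n]
    [Fintype ι] [Fintype κ] {e : ι → m → ℂ} {f : κ → n → ℂ} (he : ∑ i, ketBra (e i) ≤ 1)
    (hf : ∑ j, ketBra (f j) ≤ 1) {T : ℝ} (hT : 0 ≤ T) {c : ι × κ → ℝ} (hc : ∀ x, c x ≤ T) :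
    T • 1 - ∑ x, c x • ketBra (prodVec (e x.1) (f x.2)) ∈ separableCone m n := by
  have sum_kronecker_sum : (∑ i, ketBra (e i)) ⊗ₖ (∑ j, ketBra (f j)) =
      ∑ x : ι × κ, ketBra (prodVec (e x.1) (f x.2)) := by
    ext y z
    simp [ketBra_prodVec, Matrix.sum_apply, Finset.sum_mul_sum, Fintype.sum_prod_type]
  have resolution : (1 : Matrix (m × n) (m × n) ℂ) =
      (1 - ∑ i, ketBra (e i)) ⊗ₖ 1 + (∑ i, ketBra (e i)) ⊗ₖ (1 - ∑ j, ketBra (f j)) +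
        ∑ x : ι × κ, ketBra (prodVec (e x.1) (f x.2)) := by
    rw [← sum_kronecker_sum, add_assoc, ← kronecker_add, sub_add_cancel, ← add_kronecker,
      sub_add_cancel, one_kronecker_one]
  have decomposition : T • 1 - ∑ x, c x • ketBra (prodVec (e x.1) (f x.2)) =
      T • ((1 - ∑ i, ketBra (e i)) ⊗ₖ 1 + (∑ i, ketBra (e i)) ⊗ₖ (1 - ∑ j, ketBra (f j))) +
        ∑ x, (T - c x) • ketBra (prodVec (e x.1) (f x.2)) := by
    simp only [sub_smul, Finset.sum_sub_distrib, ← Finset.smul_sum]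
    nth_rw 1 [resolution]
    module
  rw [decomposition]
  refine add_mem ((separableCone m n).smul_mem hT (add_mem ?_ ?_)) (sum_mem fun x _ =>
    (separableCone m n).smul_mem (sub_nonneg.2 (hc x)) (ketBra_prodVec_mem_separableCone _ _))
  · exact kronecker_mem_separableCone (Matrix.le_iff.1 he) PosSemidef.one
  · exact kronecker_mem_separableCone (posSemidef_sum _ fun i _ => posSemidef_ketBra _)
      (Matrix.le_iff.1 hf)

lemma smul_one_sub_sum_add_sum_offDiag_mem_separableCone [Finite m] [Finite n] [DecidableEq m]
    [DecidableEq n] [Fintype ι] {e : ι → m → ℂ} {f : ι → n → ℂ} (he : ∑ i, ketBra (e i) ≤ 1)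
    (hf : ∑ i, ketBra (f i) ≤ 1) {T : ℝ} (hT : 0 ≤ T) {b : ι → ℝ} (hb : ∀ i, b i ≤ T)
    {c : ι × ι → ℝ} (hc : ∀ x ∈ Finset.univ.offDiag, c x ≤ T) :
    T • 1 - (∑ i, b i • ketBra (prodVec (e i) (f i)) +
      ∑ x ∈ Finset.univ.offDiag, c x • ketBra (prodVec (e x.1) (f x.2))) ∈
      separableCone m n := by
  classical
  have offDiag_sum : ∑ x ∈ Finset.univ.offDiag, c x • ketBra (prodVec (e x.1) (f x.2)) =
      ∑ x ∈ Finset.univ.offDiag,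
        (if x.1 = x.2 then b x.1 else c x) • ketBra (prodVec (e x.1) (f x.2)) :=
    Finset.sum_congr rfl fun x hx => by rw [if_neg (Finset.mem_offDiag.1 hx).2.2]
  have remainder := smul_one_sub_sum_mem_separableCone he hf hT
    (c := fun x => if x.1 = x.2 then b x.1 else c x) fun x => by
      split_ifs with h
      · exact hb x.1
      · exact hc x (by simp [h])
  rw [sum_prod_eq_sum_add_sum_offDiag, ← offDiag_sum] at remainder
  simpa using remainder

lemma smul_one_sub_ketBra_mem_separableCone [Finite m] [Finite n] [DecidableEq m] [DecidableEq n]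
    [Fintype ι] {e : ι → m → ℂ} {f : ι → n → ℂ} (he : ∑ i, ketBra (e i) ≤ 1)
    (hf : ∑ i, ketBra (f i) ≤ 1) (a : ι → ℝ) :
    (∑ i, a i ^ 2) • 1 - ketBra (∑ i, a i • prodVec (e i) (f i)) ∈ separableCone m n := by
  let v (i : ι) : m × n → ℂ := prodVec (e i) (f i)
  have pair (x : ι × ι) : ketBra (a x.2 • v x.1 - a x.1 • v x.2) +
      (a x.2 ^ 2 • ketBra (prodVec (e x.1) (f x.2)) +
        a x.1 ^ 2 • ketBra (prodVec (e x.2) (f x.1))) ∈ separableCone m n := by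
    simpa only [smul_prodVec, ketBra_smul, neg_sq, sub_eq_add_neg, ← neg_smul] using
      ketBra_add_prodVec_mem_separableCone (a x.2 • e x.1) (-a x.1 • e x.2) (f x.1) (f x.2)
  have lagrange : ∑ x ∈ Finset.univ.offDiag, ketBra (a x.2 • v x.1 - a x.1 • v x.2) =
      (2 : ℝ) • ((∑ i, a i ^ 2) • ∑ i, ketBra (v i) - ketBra (∑ i, a i • v i)) := by
    rw [← sum_ketBra_smul_sub_smul, ← Fintype.sum_prod_type', sum_prod_eq_sum_add_sum_offDiag]
    simp [ketBra]
  have swap : ∑ x ∈ Finset.univ.offDiag, a x.1 ^ 2 • ketBra (prodVec (e x.2) (f x.1)) =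
      ∑ x ∈ Finset.univ.offDiag, a x.2 ^ 2 • ketBra (prodVec (e x.1) (f x.2)) :=
    Finset.sum_equiv (Equiv.prodComm ι ι) (by simp [eq_comm]) fun _ _ => rfl
  have remainder := smul_one_sub_sum_add_sum_offDiag_mem_separableCone he hf
    (Finset.sum_nonneg fun i _ => sq_nonneg (a i)) (fun _ => le_rfl)
    (c := fun x => a x.2 ^ 2) fun x _ =>
      Finset.single_le_sum (fun i _ => sq_nonneg (a i)) (Finset.mem_univ x.2)
  convert add_mem ((separableCone m n).smul_mem (one_half_pos (α := ℝ)).le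
    (sum_mem fun x (_ : x ∈ Finset.univ.offDiag) => pair x)) remainder using 1
  rw [Finset.sum_add_distrib, Finset.sum_add_distrib, lagrange, swap, ← Finset.smul_sum]
  module

lemma smul_one_add_two_smul_ketBra_mem_separableCone [Finite m] [Finite n] [DecidableEq m]
    [DecidableEq n] [Fintype ι] {e : ι → m → ℂ} {f : ι → n → ℂ} (he : ∑ i, ketBra (e i) ≤ 1)
    (hf : ∑ i, ketBra (f i) ≤ 1) (a : ι → ℝ) :
    (∑ i, a i ^ 2) • 1 + (2 : ℝ) • ketBra (∑ i, a i • prodVec (e i) (f i)) ∈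
      separableCone m n := by
  classical
  have average_left :=
    ketBra_sum_prodVec_add_sum_offDiag_mem_separableCone (fun i => a i • e i) f
  have average_right :=
    ketBra_sum_prodVec_add_sum_offDiag_mem_separableCone e fun i => a i • f i
  simp only [smul_prodVec, ketBra_smul] at average_left
  simp only [prodVec_smul, ketBra_smul] at average_right
  have weight_le (x : ι × ι) (hx : x ∈ Finset.univ.offDiag) :
      a x.1 ^ 2 + a x.2 ^ 2 ≤ ∑ i, a i ^ 2 := by
    rw [← Finset.sum_pair (f := fun i => a i ^ 2) (Finset.mem_offDiag.1 hx).2.2]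
    exact Finset.sum_le_univ_sum_of_nonneg fun i => sq_nonneg (a i)
  have hT : 0 ≤ ∑ i, a i ^ 2 := Finset.sum_nonneg fun i _ => sq_nonneg (a i)
  have remainder :=
    smul_one_sub_sum_add_sum_offDiag_mem_separableCone he hf hT (fun _ => hT) weight_le
  convert add_mem (add_mem average_left average_right) remainder using 1
  simp only [add_smul, Finset.sum_add_distrib, zero_smul, Finset.sum_const_zero]
  module

end SeparableCone

section ReductionMap

open scoped MatrixOrder

variable {m n : Type*}

/-- The family of reduction maps `ρ ↦ Tr(ρ)·𝟙 + α·ρ`; `α = -1` is the map of the reduction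
criterion. -/
def reductionMap [Fintype m] [DecidableEq m] (α : ℝ) : Matrix m m ℂ →ₗ[ℝ] Matrix m m ℂ :=
  ((Matrix.traceLinearMap m ℂ ℂ).smulRight 1).restrictScalars ℝ + α • LinearMap.id

lemma reductionMap_apply [Fintype m] [DecidableEq m] (α : ℝ) (ρ : Matrix m m ℂ) :
    reductionMap α ρ = ρ.trace • 1 + α • ρ :=
  rfl

lemma map_mem_of_forall_ketBra [Finite m] {V : Type*} [AddCommMonoid V] [Module ℝ V]
    {ρ : Matrix m m ℂ} (hρ : ρ.PosSemidef) {C : PointedCone ℝ V} (L : Matrix m m ℂ →ₗ[ℝ] V)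
    (hL : ∀ ψ, L (ketBra ψ) ∈ C) : L ρ ∈ C := by
  obtain ⟨K, v, rfl⟩ := Matrix.posSemidef_iff_eq_sum_vecMulVec.1 hρ
  rw [map_sum]
  exact sum_mem fun k _ => hL (v k)

lemma reductionMap_ketBra_mem_separableCone [Fintype m] [Fintype n] [DecidableEq m]
    [DecidableEq n] {α : ℝ} (hα₁ : -1 ≤ α) (hα₂ : α ≤ 2) (ψ : m × n → ℂ) :
    reductionMap α (ketBra ψ) ∈ separableCone m n := by
  obtain ⟨e, f, a, he, hf, hψ, htrace⟩ := exists_schmidt_decomposition ψ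
  have minus_one := smul_one_sub_ketBra_mem_separableCone he.le hf a
  have two := smul_one_add_two_smul_ketBra_mem_separableCone he.le hf a
  rw [← hψ] at minus_one two
  have convex_combination : reductionMap α (ketBra ψ) =
      ((2 - α) / 3) • ((∑ i, a i ^ 2) • 1 - ketBra ψ) +
        ((α + 1) / 3) • ((∑ i, a i ^ 2) • 1 + (2 : ℝ) • ketBra ψ) := by
    rw [reductionMap_apply, htrace, ← RCLike.real_smul_eq_coe_smul]
    module
  rw [convex_combination]
  exact add_mem ((separableCone m n).smul_mem (by linarith) minus_one)
    ((separableCone m n).smul_mem (by linarith) two)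

theorem stmt2_general [Fintype m] [Fintype n] [DecidableEq m] [DecidableEq n]
    {ρ : Matrix (m × n) (m × n) ℂ} (hρ : ρ.PosSemidef) {α : ℝ} (hα₁ : -1 ≤ α) (hα₂ : α ≤ 2) :
    ρ.trace • 1 + (α : ℂ) • ρ ∈ separableCone m n := by
  rw [Complex.coe_smul]
  exact map_mem_of_forall_ketBra hρ (reductionMap α) (reductionMap_ketBra_mem_separableCone hα₁ hα₂)

end ReductionMap

section Qubits

variable {N : ℕ}

lemma trace_submatrix_equiv {m n R : Type*} [Fintype m] [Fintype n] [AddCommMonoid R]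
    (M : Matrix m m R) (e : n ≃ m) : (M.submatrix e e).trace = M.trace :=
  e.sum_comp fun i => M i i

/-- Splitting a computational basis label of `N` qubits into its restrictions to `X` and `Xᶜ`. -/
def bipartitionEquiv (X : Finset (Fin N)) :
    (Fin N → Fin 2) ≃ ({i // i ∈ X} → Fin 2) × ({i // i ∈ Xᶜ} → Fin 2) :=
  (Equiv.piEquivPiSubtypeProd (· ∈ X) _).trans
    ((Equiv.refl _).prodCongr
      (Equiv.arrowCongr (Equiv.subtypeEquivRight fun _ => Finset.mem_compl.symm) (Equiv.refl _)))

lemma sepAcross_of_submatrix_mem_separableCone {X : Finset (Fin N)}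
    {σ : Matrix (Fin N → Fin 2) (Fin N → Fin 2) ℂ}
    (hσ : σ.submatrix (bipartitionEquiv X).symm (bipartitionEquiv X).symm ∈ separableCone _ _) :
    SepAcross X σ := by
  obtain ⟨K, A, B, hA, hB, hAB⟩ := exists_eq_sum_kronecker_of_mem_separableCone hσ
  refine ⟨K, A, B, hA, hB, fun x y => ?_⟩
  have := congrFun₂ hAB (bipartitionEquiv X x) (bipartitionEquiv X y)
  simp only [Matrix.submatrix_apply, Equiv.symm_apply_apply, Matrix.sum_apply,
    Matrix.kroneckerMap_apply] at this
  exact this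

end Qubits

/-- The reduction map makes every PSD `N`-qubit operator separable across every
bipartition `X : Xᶜ` with `|X| = n`, for `-1 ≤ α ≤ 2`. -/
theorem stmt2 (N n : ℕ) (hN : 2 ≤ N) (hn1 : 1 ≤ n) (hn2 : n < N)
    (ρ : Matrix (Fin N → Fin 2) (Fin N → Fin 2) ℂ) (hρ : ρ.PosSemidef)
    (α : ℝ) (hα1 : -1 ≤ α) (hα2 : α ≤ 2)
    (X : Finset (Fin N)) (hX : X.card = n) :
    SepAcross X
      (ρ.trace • (1 : Matrix (Fin N → Fin 2) (Fin N → Fin 2) ℂ) + (α : ℂ) • ρ) := by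
  refine sepAcross_of_submatrix_mem_separableCone ?_
  have := stmt2_general (hρ.submatrix (bipartitionEquiv X).symm) hα1 hα2
  rwa [trace_submatrix_equiv, ← Matrix.submatrix_one_equiv (bipartitionEquiv X).symm] at this
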